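/- For every positive integer Q there exists a finite multiset σ of positive rational numbers, not all of which are integers, such that ν(σ) = 0 and σ contains an element whose denominator in lowest terms exceeds Q. -/

import Mathlib

/-!
The power sums `∑ x` and `∑ x³` are multiplicative under the product multiset
`{x * y | x ∈ σ, y ∈ τ}`, so multisets with `ν = 0` are closed under this product. The multiset
`{1/2, 1/2, 1/2, 5/2}` has sum `4` and sum of cubes `16`, hence `ν = 0`; its `n`-fold product
power contains `(1/2) ^ n`, whose denominator `2 ^ n` is unbounded.
-/

/-- ν of a finite multiset of rationals. -/
def nu (σ : Multiset ℚ) : ℚ := σ.sum ^ 2 - (σ.map (fun x => x ^ 3)).sum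

/-- The multiset of all products of an element of `σ` with an element of
`{1/2, 1/2, 1/2, 5/2}`. -/
def mulStep (σ : Multiset ℚ) : Multiset ℚ :=
  σ.map (fun x => 1 / 2 * x) + σ.map (fun x => 1 / 2 * x) + σ.map (fun x => 1 / 2 * x) +
    σ.map (fun x => 5 / 2 * x)

theorem nu_mulStep (σ : Multiset ℚ) : nu (mulStep σ) = 16 * nu σ := by
  have h (c : ℚ) : (σ.map (fun x => c * x)).sum = c * σ.sum := by
    simpa using Multiset.sum_map_mul_left (s := σ) (a := c) (f := fun x => x)
  simp only [nu, mulStep, h, Multiset.map_add, Multiset.sum_add, Multiset.map_map,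
    Function.comp_def, mul_pow, Multiset.sum_map_mul_left]
  ring

theorem exists_nu_eq_zero_half_pow_mem (n : ℕ) :
    ∃ σ : Multiset ℚ, (∀ x ∈ σ, 0 < x) ∧ nu σ = 0 ∧ (1 / 2 : ℚ) ^ n ∈ σ := by
  induction n with
  | zero => exact ⟨{1}, by simp, by simp [nu], by simp⟩
  | succ n ih =>
    obtain ⟨σ, hpos, hnu, hmem⟩ := ih
    refine ⟨mulStep σ, ?_, by rw [nu_mulStep, hnu, mul_zero], ?_⟩
    · intro x hx
      simp only [mulStep, Multiset.mem_add, Multiset.mem_map] at hx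
      rcases hx with ((⟨y, hy, rfl⟩ | ⟨y, hy, rfl⟩) | ⟨y, hy, rfl⟩) | ⟨y, hy, rfl⟩ <;>
        exact mul_pos (by norm_num) (hpos y hy)
    · rw [pow_succ']
      exact Multiset.mem_add.2 (Or.inl (Multiset.mem_add.2 (Or.inr
        (Multiset.mem_map_of_mem (fun x => 1 / 2 * x) hmem))))

/-- There are ν = 0 multisets of positive rationals, not all integers, containing an
element whose lowest-terms denominator exceeds any prescribed bound Q. -/
theorem stmt_9 (Q : ℕ) (hQ : 0 < Q) :
    ∃ σ : Multiset ℚ, (∀ x ∈ σ, 0 < x) ∧ (¬ ∀ x ∈ σ, x.den = 1) ∧ nu σ = 0 ∧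
      ∃ x ∈ σ, Q < x.den := by
  obtain ⟨σ, hpos, hnu, hmem⟩ := exists_nu_eq_zero_half_pow_mem Q
  have hden : Q < ((1 / 2 : ℚ) ^ Q).den := by
    rw [Rat.den_pow, show (1 / 2 : ℚ).den = 2 by norm_num]
    exact Nat.lt_two_pow_self
  refine ⟨σ, hpos, fun h => ?_, hnu, _, hmem, hden⟩
  have := h _ hmem
  omega
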